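/- arXiv:1710.04680 — 2 statements merged into one kernel-verified Lean document; each statement's English description precedes it below -/
import Mathlib

section
/- Let k ≥ 5 and n ≥ 2(k − 1). Then there exist nine matrices in GL(n, ℤ), eight of which have order exactly k and one of which has order exactly 2, such that the subgroup they generate is all of GL(n, ℤ). -/
/-!
Let `ρ` be a permutation matrix and `E` an elementary matrix `1 + E_{ij}`. The quotient
`(E ρ E⁻¹) ρ⁻¹` is the product of `E` with the inverse of the elementary matrix in position
`(ρ i, ρ j)`. When `ρ` fixes `p` and `q` and moves `a ↦ b ↦ c`, the two quotients obtained from the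
positions `(q, b)` and `(a, p)` have as commutator a single elementary matrix in position `(q, p)`.
So three matrices of the order of `ρ` yield one elementary matrix.

Rotating simultaneously the consecutive blocks of length `k` that start at `0`, at `1`, and at
`n - k` gives three permutations of order `k` which together move every `i` to `i + 1`, hence
generate a transitive group. The relation `1 + E_{ij} ∈ H` is transitive and invariant under these
permutations, so a single elementary matrix propagates to all positions. Together with one sign
change, Gaussian elimination over `ℤ` gives all of `GL(n, ℤ)`. The three rotations, two conjugates
and the sign change are enough.
-/

namespace GLGeneration

open Equiv Matrix
open scoped commutatorElement

variable {ι R : Type*} [Fintype ι] [DecidableEq ι]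

section CommRing

variable [CommRing R]

/-- The elementary matrix `1 + c E_{ij}` as an element of `GL ι R`. -/
def elementary {i j : ι} (hij : i ≠ j) (c : R) : GL ι R :=
  SpecialLinearGroup.toGL (SpecialLinearGroup.transvection hij c)

/-- The diagonal matrix with the unit `u` in position `(i, i)` and ones elsewhere,
as a homomorphism in `u`. -/
def diagonalUnit (i : ι) : Rˣ →* GL ι R :=
  (Units.map (diagonalRingHom ι R).toMonoidHom).comp
    (MulEquiv.piUnits.symm.toMonoidHom.comp (MonoidHom.mulSingle (fun _ : ι ↦ Rˣ) i))

/-- The permutation matrices in `GL ι R`, with the convention `permutation σ e_j = e_{σ j}`. -/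
def permutation : Perm ι →* GL ι R :=
  (permMatrixHom (n := ι) (R := R)).toHomUnits

theorem coe_elementary {i j : ι} (hij : i ≠ j) (c : R) :
    (elementary hij c : Matrix ι ι R) = 1 + single i j c := rfl

theorem elementary_add {i j : ι} (hij : i ≠ j) (c d : R) :
    elementary hij (c + d) = elementary hij c * elementary hij d := by
  rw [elementary, SpecialLinearGroup.transvection_add, map_mul]
  rfl

theorem elementary_neg {i j : ι} (hij : i ≠ j) (c : R) :
    elementary hij (-c) = (elementary hij c)⁻¹ := by
  rw [elementary, ← SpecialLinearGroup.transvection_inv, map_inv]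
  rfl

theorem elementary_zsmul {i j : ι} (hij : i ≠ j) (m : ℤ) (c : R) :
    elementary hij (m • c) = elementary hij c ^ m := by
  let f : Multiplicative R →* GL ι R :=
    MonoidHom.mk' (fun x ↦ elementary hij x.toAdd) fun _ _ ↦ elementary_add hij _ _
  exact map_zpow f (Multiplicative.ofAdd c) m

theorem elementary_mul_apply_same {i j : ι} (hij : i ≠ j) (c : R) (g : GL ι R) (b : ι) :
    (elementary hij c * g) i b = g i b + c * g j b :=
  transvection_mul_apply_same i j b c g.val

theorem elementary_mul_apply_of_ne {i j a : ι} (hij : i ≠ j) (ha : a ≠ i) (c : R) (g : GL ι R)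
    (b : ι) : (elementary hij c * g) a b = g a b :=
  transvection_mul_apply_of_ne i j a b ha c g.val

theorem commutator_elementary {i j l : ι} (hij : i ≠ j) (hjl : j ≠ l) (hil : i ≠ l) (c d : R) :
    ⁅elementary hij c, elementary hjl d⁆ = elementary hil (c * d) := by
  rw [commutatorElement_def, mul_inv_eq_iff_eq_mul, mul_inv_eq_iff_eq_mul]
  apply Units.ext
  simp only [Units.val_mul, coe_elementary, mul_add, add_mul, one_mul, mul_one,
    single_mul_single_same, single_mul_single_of_ne _ _ _ _ hjl.symm,
    single_mul_single_of_ne _ _ _ _ hil.symm, add_zero]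
  abel

/-- In the products of the left with the right factors, every term vanishes except
`E_{qb} E_{bp}`, because `b` is the only index shared by `{b, c}` and `{a, b}`. -/
theorem commutator_elementary_differences {p q a b c : ι} (hqp : q ≠ p) (hqb : q ≠ b)
    (hqc : q ≠ c) (hap : a ≠ p) (hbp : b ≠ p) (hab : a ≠ b) (hac : a ≠ c) (hbc : b ≠ c) (x y : R) :
    ⁅elementary hqb x * elementary hqc (-x), elementary hap y * elementary hbp (-y)⁆ =
      elementary hqp (-(x * y)) := by
  rw [commutatorElement_def, mul_inv_eq_iff_eq_mul, mul_inv_eq_iff_eq_mul]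
  apply Units.ext
  simp only [Units.val_mul, coe_elementary, mul_add, add_mul, one_mul, mul_one, mul_neg,
    single_mul_single_same, single_mul_single_of_ne, ne_eq, hqp.symm, hqb.symm, hap.symm, hbp.symm,
    hab.symm, hac.symm, hbc.symm, not_false_eq_true, add_zero]
  abel

theorem coe_diagonalUnit (i : ι) (u : Rˣ) :
    (diagonalUnit i u : Matrix ι ι R) = diagonal fun a ↦ ↑((Pi.mulSingle i u : ι → Rˣ) a) := rfl

theorem diagonalUnit_injective (i : ι) : Function.Injective (diagonalUnit (R := R) i) := by
  intro u v huv
  ext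
  simpa [coe_diagonalUnit] using congrArg (fun g : GL ι R ↦ g i i) huv

theorem orderOf_diagonalUnit_neg_one (i : ι) : orderOf (diagonalUnit i (-1) : GL ι ℤ) = 2 := by
  rw [orderOf_injective _ (diagonalUnit_injective i)]
  exact orderOf_eq_prime (by simp) (by decide)

theorem diagonalUnit_mul_apply_same (i : ι) (u : Rˣ) (g : GL ι R) (b : ι) :
    (diagonalUnit i u * g) i b = u * g i b := by
  simp [coe_diagonalUnit]

theorem coe_permutation (σ : Perm ι) :
    ((permutation σ : GL ι R) : Matrix ι ι R) = (1 : Matrix ι ι R).submatrix id σ := by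
  rw [← one_mul (permutation σ).val]
  exact PEquiv.mul_toMatrix_toPEquiv _ _

theorem permutation_injective [Nontrivial R] :
    Function.Injective (permutation : Perm ι →* GL ι R) := by
  intro σ τ h
  ext j
  simpa [coe_permutation, one_apply] using congrArg (fun g : GL ι R ↦ g (σ j) j) h

theorem coe_permutation_mul_mul_inv (σ : Perm ι) (g : GL ι R) :
    (permutation σ * g * (permutation σ)⁻¹ : GL ι R) = g.val.submatrix σ.symm σ.symm := by
  rw [← map_inv, Units.val_mul, Units.val_mul]
  exact (PEquiv.mul_toMatrix_toPEquiv _ _).trans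
    (congrArg (submatrix · id _) (PEquiv.toMatrix_toPEquiv_mul _ _))

theorem permutation_mul_elementary_mul_inv (σ : Perm ι) {i j : ι} (hij : i ≠ j) (c : R) :
    permutation σ * elementary hij c * (permutation σ)⁻¹ =
      elementary (σ.injective.ne hij) c := by
  apply Units.ext
  rw [coe_permutation_mul_mul_inv, coe_elementary, coe_elementary, submatrix_add]
  simp

theorem permutation_mul_diagonalUnit_mul_inv (σ : Perm ι) (i : ι) (u : Rˣ) :
    permutation σ * diagonalUnit i u * (permutation σ)⁻¹ = diagonalUnit (σ i) u := by
  apply Units.ext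
  rw [coe_permutation_mul_mul_inv, coe_diagonalUnit, coe_diagonalUnit, submatrix_diagonal_equiv]
  congr 1
  ext a
  simp [Pi.mulSingle_apply, Equiv.symm_apply_eq]

theorem orderOf_permutation [Nontrivial R] (σ : Perm ι) :
    orderOf (permutation σ : GL ι R) = orderOf σ :=
  orderOf_injective _ permutation_injective σ

section Conjugates

variable {H : Subgroup (GL ι R)} {σ : Perm ι}

theorem elementary_mul_elementary_neg_mem (hσ : permutation σ ∈ H) {i j : ι} (hij : i ≠ j) {c : R}
    (hconj : elementary hij c * permutation σ * (elementary hij c)⁻¹ ∈ H) :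
    elementary hij c * elementary (σ.injective.ne hij) (-c) ∈ H := by
  have hdiff := H.mul_mem hconj (H.inv_mem hσ)
  rwa [← elementary_neg, mul_assoc, mul_assoc, ← mul_assoc (permutation σ),
    permutation_mul_elementary_mul_inv] at hdiff

theorem elementary_mem_of_conj_mem (hσ : permutation σ ∈ H) {p q a : ι} (hp : σ p = p)
    (hq : σ q = q) (hσa : σ a ≠ a) (hσσa : σ (σ a) ≠ a) (hqp : q ≠ p) (hqa : q ≠ σ a)
    (hap : a ≠ p) {x y : R}
    (hx : elementary hqa x * permutation σ * (elementary hqa x)⁻¹ ∈ H)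
    (hy : elementary hap y * permutation σ * (elementary hap y)⁻¹ ∈ H) :
    elementary hqp (x * y) ∈ H := by
  have hx' := elementary_mul_elementary_neg_mem hσ hqa hx
  have hy' := elementary_mul_elementary_neg_mem hσ hap hy
  simp only [hp, hq] at hx' hy'
  have hcomm := H.commutator_le_self (Subgroup.commutator_mem_commutator hx' hy')
  rw [commutator_elementary_differences hqp _ _ _ _ hσa.symm hσσa.symm (σ.injective.ne hσa.symm),
    elementary_neg] at hcomm
  exact H.inv_mem_iff.mp hcomm

end Conjugates

variable {s : Finset ι} {g : GL ι R} {m : ι}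

/-- The matrices that fix the standard basis vector `e_j` for every `j ∈ s`, that is, whose columns
indexed by `s` are those of the identity matrix. -/
def basisFixer (R : Type*) [CommRing R] (s : Finset ι) : Subgroup (GL ι R) where
  carrier := {g | ∀ j ∈ s, g.val *ᵥ Pi.single j 1 = Pi.single j 1}
  mul_mem' hg hh j hj := by rw [Units.val_mul, ← mulVec_mulVec, hh j hj, hg j hj]
  one_mem' j _ := one_mulVec _
  inv_mem' {g} hg j hj := by
    rw [← hg j hj, mulVec_mulVec, ← Units.val_mul, inv_mul_cancel, Units.val_one, one_mulVec,
      hg j hj]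

theorem mem_basisFixer_iff :
    g ∈ basisFixer R s ↔ ∀ j ∈ s, ∀ i, g i j = (1 : Matrix ι ι R) i j := by
  refine forall₂_congr fun j _ ↦ ?_
  simp [funext_iff, one_apply, Pi.single_apply]

theorem elementary_mem_basisFixer {i j : ι} (hij : i ≠ j) (hj : j ∉ s) (c : R) :
    elementary hij c ∈ basisFixer R s := by
  refine mem_basisFixer_iff.mpr fun b hb a ↦ ?_
  simp [coe_elementary, single_apply_of_col_ne _ _ (ne_of_mem_of_not_mem hb hj).symm]

theorem diagonalUnit_mem_basisFixer {i : ι} (hi : i ∉ s) (u : Rˣ) :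
    diagonalUnit i u ∈ basisFixer R s := by
  refine mem_basisFixer_iff.mpr fun b hb a ↦ ?_
  rcases eq_or_ne a b with rfl | hab
  · simp [coe_diagonalUnit, ne_of_mem_of_not_mem hb hi]
  · simp [coe_diagonalUnit, hab]

theorem basisFixer_univ : basisFixer R (Finset.univ : Finset ι) = ⊥ := by
  refine (Subgroup.eq_bot_iff_forall _).mpr fun g hg ↦ ?_
  ext i j
  exact mem_basisFixer_iff.mp hg j (Finset.mem_univ j) i

theorem isUnit_of_forall_dvd_col (hg : g ∈ basisFixer R s) (hm : m ∉ s) {x : R}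
    (hx : ∀ i ∉ s, x ∣ g i m) : IsUnit x := by
  have hsum : ∑ i, g⁻¹ m i * g i m = 1 := by
    rw [← Matrix.mul_apply, ← Units.val_mul, inv_mul_cancel, Units.val_one, one_apply_eq]
  refine isUnit_of_dvd_one (hsum ▸ Finset.dvd_sum fun i _ ↦ ?_)
  by_cases hi : i ∈ s
  · rw [mem_basisFixer_iff.mp (inv_mem hg) i hi m, one_apply_ne (ne_of_mem_of_not_mem hi hm).symm,
      zero_mul]
    exact dvd_zero x
  · exact (hx i hi).mul_left _

theorem exists_mem_basisFixer_insert {H : Subgroup (GL ι R)}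
    (hE : ∀ i j (hij : i ≠ j) (c : R), elementary hij c ∈ H)
    (hg : g ∈ basisFixer R s) (hmm : g m m = 1) (hm : m ∉ s) :
    ∃ h ∈ H, h * g ∈ basisFixer R (insert m s) := by
  suffices ∀ t : Finset ι, m ∉ t → ∃ h ∈ H, h * g ∈ basisFixer R s ∧ (h * g) m m = 1 ∧
      ∀ i ∈ t, (h * g) i m = 0 by
    obtain ⟨h, hH, hfix, hone, hzero⟩ := this (Finset.univ.erase m) (Finset.notMem_erase m _)
    refine ⟨h, hH, mem_basisFixer_iff.mpr fun j hj i ↦ ?_⟩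
    rcases Finset.mem_insert.mp hj with rfl | hjs
    · rcases eq_or_ne i j with rfl | hij
      · rw [hone, one_apply_eq]
      · rw [hzero i (by simpa using hij), one_apply_ne hij]
    · exact mem_basisFixer_iff.mp hfix j hjs i
  intro t
  induction t using Finset.induction_on with
  | empty => exact fun _ ↦ ⟨1, H.one_mem, by simpa using hg, by simpa using hmm, by simp⟩
  | insert a t _ ih =>
    intro hmat
    obtain ⟨hma, hmt⟩ : m ≠ a ∧ m ∉ t := by simpa using hmat
    obtain ⟨h, hH, hfix, hone, hzero⟩ := ih hmt
    refine ⟨elementary hma.symm (-(h * g) a m) * h, H.mul_mem (hE ..) hH, ?_, ?_, fun i hi ↦ ?_⟩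
    · rw [mul_assoc]
      exact mul_mem (elementary_mem_basisFixer _ hm _) hfix
    · rw [mul_assoc, elementary_mul_apply_of_ne _ hma, hone]
    · rw [mul_assoc]
      rcases eq_or_ne i a with rfl | hia
      · rw [elementary_mul_apply_same, hone, mul_one, add_neg_cancel]
      · rw [elementary_mul_apply_of_ne _ hia, hzero i (Finset.mem_of_mem_insert_of_ne hi hia)]

theorem exists_apply_eq_one_of_isUnit {H : Subgroup (GL ι R)}
    (hE : ∀ i j (hij : i ≠ j) (c : R), elementary hij c ∈ H)
    (hD : ∀ i (u : Rˣ), diagonalUnit i u ∈ H)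
    (hg : g ∈ basisFixer R s) (hm : m ∉ s) {i : ι} (hi : i ∉ s) (hu : IsUnit (g i m)) :
    ∃ h ∈ H, h * g ∈ basisFixer R s ∧ (h * g) m m = 1 := by
  obtain ⟨u, hu⟩ := hu
  rcases eq_or_ne m i with rfl | hmi
  · refine ⟨diagonalUnit m u⁻¹, hD .., mul_mem (diagonalUnit_mem_basisFixer hm _) hg, ?_⟩
    rw [diagonalUnit_mul_apply_same, ← hu, Units.inv_mul]
  · refine ⟨elementary hmi ((1 - g m m) * ↑u⁻¹), hE ..,
      mul_mem (elementary_mem_basisFixer _ hi _) hg, ?_⟩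
    rw [elementary_mul_apply_same, ← hu, Units.inv_mul_cancel_right, add_sub_cancel]

end CommRing

section EuclideanDomain

variable [EuclideanDomain R] {H : Subgroup (GL ι R)}

theorem exists_isUnit_apply (hE : ∀ i j (hij : i ≠ j) (c : R), elementary hij c ∈ H)
    {s : Finset ι} {g : GL ι R} (hg : g ∈ basisFixer R s) {m : ι} (hm : m ∉ s) :
    ∃ h ∈ H, h * g ∈ basisFixer R s ∧ ∃ i ∉ s, IsUnit ((h * g) i m) := by
  let entries : Set R :=
    {x | x ≠ 0 ∧ ∃ h ∈ H, h * g ∈ basisFixer R s ∧ ∃ i ∉ s, (h * g) i m = x}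
  have hne : entries.Nonempty := by
    by_contra! hempty
    refine not_isUnit_zero (isUnit_of_forall_dvd_col hg hm fun i hi ↦ zero_dvd_iff.mpr ?_)
    by_contra hgim
    exact hempty.subset (⟨hgim, 1, H.one_mem, by simpa using hg, i, hi, by simp⟩ : g i m ∈ entries)
  obtain ⟨x, ⟨hx₀, h, hH, hfix, i, hi, rfl⟩, hmin⟩ :=
    EuclideanDomain.r_wellFounded.has_min entries hne
  refine ⟨h, hH, hfix, i, hi, isUnit_of_forall_dvd_col hfix hm fun l hl ↦ ?_⟩
  rcases eq_or_ne l i with rfl | hli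
  · rfl
  set x := (h * g) i m
  set y := (h * g) l m with hy
  by_contra hxy
  refine hmin (y % x) ⟨mt EuclideanDomain.mod_eq_zero.mp hxy, elementary hli (-(y / x)) * h,
    H.mul_mem (hE ..) hH, ?_, l, hl, ?_⟩ (EuclideanDomain.mod_lt y hx₀)
  · rw [mul_assoc]
    exact mul_mem (elementary_mem_basisFixer _ hi _) hfix
  · rw [mul_assoc, elementary_mul_apply_same, EuclideanDomain.mod_eq_sub_mul_div, ← hy]
    ring

theorem eq_top_of_elementary_of_diagonalUnit
    (hE : ∀ i j (hij : i ≠ j) (c : R), elementary hij c ∈ H)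
    (hD : ∀ i (u : Rˣ), diagonalUnit i u ∈ H) : H = ⊤ := by
  refine (Subgroup.eq_top_iff' H).mpr fun g ↦ ?_
  have hred : ∀ s : Finset ι, ∃ h ∈ H, h * g ∈ basisFixer R s := by
    intro s
    induction s using Finset.induction_on with
    | empty => exact ⟨1, H.one_mem, mem_basisFixer_iff.mpr (by simp)⟩
    | insert m s hm ih =>
      obtain ⟨h₀, hH₀, hfix₀⟩ := ih
      obtain ⟨h₁, hH₁, hfix₁, i, hi, hunit⟩ := exists_isUnit_apply hE hfix₀ hm
      obtain ⟨h₂, hH₂, hfix₂, hone⟩ := exists_apply_eq_one_of_isUnit hE hD hfix₁ hm hi hunit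
      obtain ⟨h₃, hH₃, hfix₃⟩ := exists_mem_basisFixer_insert hE hfix₂ hone hm
      refine ⟨h₃ * (h₂ * (h₁ * h₀)),
        H.mul_mem hH₃ (H.mul_mem hH₂ (H.mul_mem hH₁ hH₀)), ?_⟩
      simpa only [mul_assoc] using hfix₃
  obtain ⟨h, hH, hfix⟩ := hred Finset.univ
  rw [basisFixer_univ, Subgroup.mem_bot] at hfix
  rw [eq_inv_of_mul_eq_one_right hfix]
  exact H.inv_mem hH

end EuclideanDomain

section Transitivity

theorem forall_of_isPretransitive_closure {α : Type*} [Finite α] {S : Set (Perm α)}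
    [MulAction.IsPretransitive (Subgroup.closure S) α] {r : α → α → Prop} (hrefl : ∀ x, r x x)
    (htrans : ∀ {x y z}, r x y → r y z → r x z) (hinv : ∀ σ ∈ S, ∀ {x y}, r x y → r (σ x) (σ y))
    {x₀ : α} (hbase : ∀ σ ∈ S, r x₀ (σ x₀)) (x y : α) : r x y := by
  have hinv' : ∀ g ∈ Subgroup.closure S, ∀ {x y}, r x y → r (g x) (g y) := by
    intro g hg
    rw [← Subgroup.mem_toSubmonoid, Subgroup.closure_toSubmonoid_of_finite] at hg
    induction hg using Submonoid.closure_induction with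
    | mem σ hσ => exact hinv σ hσ
    | one => exact id
    | mul _ _ _ _ ihg ihh => exact fun hxy ↦ ihg (ihh hxy)
  have hbase' : ∀ g ∈ Subgroup.closure S, r x₀ (g x₀) := by
    intro g hg
    rw [← Subgroup.mem_toSubmonoid, Subgroup.closure_toSubmonoid_of_finite] at hg
    induction hg using Submonoid.closure_induction_left with
    | one => exact hrefl x₀
    | mul_left σ hσ g _ ih => exact htrans (hbase σ hσ) (hinv σ hσ ih)
  obtain ⟨⟨g, hg⟩, rfl⟩ := MulAction.exists_smul_eq (Subgroup.closure S) x₀ x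
  obtain ⟨⟨h, hh⟩, hy⟩ := MulAction.exists_smul_eq (Subgroup.closure S) x₀ (g.symm y)
  have hgy : r (g x₀) (g (h x₀)) := hinv' g hg (hbase' h hh)
  rwa [show h x₀ = g.symm y from hy, g.apply_symm_apply] at hgy

/-- The relation on indices given by membership of `1 + E_{ij}` in `H`, made reflexive by
convention on the diagonal. -/
def ElementaryRel [CommRing R] (H : Subgroup (GL ι R)) (i j : ι) : Prop :=
  ∀ hij : i ≠ j, elementary hij (1 : R) ∈ H

variable [CommRing R] {H : Subgroup (GL ι R)}

theorem ElementaryRel.refl (i : ι) : ElementaryRel H i i := fun hii ↦ absurd rfl hii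

theorem ElementaryRel.trans {i j l : ι} (hij : ElementaryRel H i j) (hjl : ElementaryRel H j l) :
    ElementaryRel H i l := by
  intro hil
  rcases eq_or_ne i j with rfl | hne
  · exact hjl hil
  rcases eq_or_ne j l with rfl | hne'
  · exact hij hil
  have hcomm := H.commutator_le_self
    (Subgroup.commutator_mem_commutator (hij hne) (hjl hne'))
  rwa [commutator_elementary hne hne' hil, mul_one] at hcomm

theorem ElementaryRel.map {i j : ι} (hij : ElementaryRel H i j) {σ : Perm ι}
    (hσ : permutation σ ∈ H) : ElementaryRel H (σ i) (σ j) := by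
  intro hne
  rw [← permutation_mul_elementary_mul_inv σ (ne_of_apply_ne σ hne)]
  exact H.mul_mem (H.mul_mem hσ (hij _)) (H.inv_mem hσ)

theorem diagonalUnit_mem_of_isPretransitive_closure {S : Set (Perm ι)}
    [MulAction.IsPretransitive (Subgroup.closure S) ι] (hS : ∀ σ ∈ S, permutation σ ∈ H) {i : ι}
    {u : Rˣ} (hi : diagonalUnit i u ∈ H) (j : ι) : diagonalUnit j u ∈ H := by
  obtain ⟨⟨σ, hσ⟩, rfl⟩ := MulAction.exists_smul_eq (Subgroup.closure S) i j
  have hσH : permutation σ ∈ H := (Subgroup.closure_le (H.comap permutation)).mpr hS hσ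
  rw [show (⟨σ, hσ⟩ : Subgroup.closure S) • i = σ i from rfl,
    ← permutation_mul_diagonalUnit_mul_inv]
  exact H.mul_mem (H.mul_mem hσH hi) (H.inv_mem hσH)

theorem eq_top_of_isPretransitive_closure {H : Subgroup (GL ι ℤ)} {S : Set (Perm ι)}
    [MulAction.IsPretransitive (Subgroup.closure S) ι] (hS : ∀ σ ∈ S, permutation σ ∈ H)
    {i : ι} (hbase : ∀ σ ∈ S, ElementaryRel H i (σ i)) (hD : diagonalUnit i (-1) ∈ H) :
    H = ⊤ := by
  have hrel : ∀ i j, ElementaryRel H i j :=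
    forall_of_isPretransitive_closure ElementaryRel.refl ElementaryRel.trans
      (fun σ hσ _ _ hij ↦ hij.map (hS σ hσ)) hbase
  refine eq_top_of_elementary_of_diagonalUnit (fun i j hij c ↦ ?_) fun j u ↦ ?_
  · rw [← mul_one c, ← smul_eq_mul, elementary_zsmul]
    exact H.zpow_mem (hrel i j hij) c
  · rcases Int.units_eq_one_or u with rfl | rfl
    · simpa only [map_one] using H.one_mem
    · exact diagonalUnit_mem_of_isPretransitive_closure hS hD j

end Transitivity

section BlockRotation

/-- The embedding of `⌊(n - s) / k⌋` consecutive blocks of length `k` into `{0, …, n - 1}`, the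
first one starting at `s`. -/
def blockEmbedding (n k s : ℕ) : (Σ _ : Fin ((n - s) / k), Fin k) ↪ Fin n where
  toFun x := ⟨s + finProdFinEquiv (x.1, x.2), by
    have := (finProdFinEquiv (x.1, x.2)).isLt.trans_le (Nat.div_mul_le_self (n - s) k)
    lia⟩
  inj' x y hxy := by
    have hprod : (x.1, x.2) = (y.1, y.2) :=
      finProdFinEquiv.injective (Fin.ext (Nat.add_left_cancel (Fin.mk.inj hxy)))
    exact Sigma.ext (congrArg Prod.fst hprod) (heq_of_eq (congrArg Prod.snd hprod))

/-- The simultaneous cyclic rotation of the blocks of `blockEmbedding n k s`; the points outside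
the blocks are fixed. -/
noncomputable def blockRotation (n k s : ℕ) : Perm (Fin n) :=
  Perm.viaEmbeddingHom (blockEmbedding n k s)
    (Perm.sigmaCongrRightHom (fun _ ↦ Fin k) fun _ ↦ finRotate k)

theorem orderOf_finRotate {k : ℕ} (hk : 2 ≤ k) : orderOf (finRotate k) = k := by
  rw [(isCycle_finRotate_of_le hk).orderOf, support_finRotate_of_le hk, Finset.card_univ,
    Fintype.card_fin]

theorem orderOf_blockRotation {n k s : ℕ} (hk : 2 ≤ k) (hs : s + k ≤ n) :
    orderOf (blockRotation n k s) = k := by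
  have : NeZero ((n - s) / k) := ⟨(Nat.div_pos (by lia) (by lia)).ne'⟩
  rw [blockRotation, orderOf_injective _ (Perm.viaEmbeddingHom_injective _),
    orderOf_injective _ Perm.sigmaCongrRightHom_injective]
  exact (orderOf_injective (Pi.constMonoidHom (Fin ((n - s) / k)) (Perm (Fin k)))
    Function.const_injective _).trans (orderOf_finRotate hk)

theorem blockRotation_apply_of_lt {n k s : ℕ} {i : Fin n} (hi : (i : ℕ) < s) :
    blockRotation n k s i = i := by
  refine Perm.viaEmbedding_apply_of_notMem _ _ i ?_
  rintro ⟨x, rfl⟩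
  exact (Nat.le_add_right _ _).not_gt hi

theorem val_blockRotation_apply {n k s a b : ℕ} {i : Fin n} (hi : (i : ℕ) = s + (b + k * a))
    (hb : b + 1 < k) (ha : s + k * (a + 1) ≤ n) : (blockRotation n k s i : ℕ) = i + 1 := by
  have ha' : a < (n - s) / k := (Nat.le_div_iff_mul_le (by lia)).mpr (by lia)
  obtain rfl : i = blockEmbedding n k s ⟨⟨a, ha'⟩, ⟨b, by lia⟩⟩ := Fin.ext hi
  rw [blockRotation, Perm.viaEmbeddingHom_apply, Perm.viaEmbedding_apply]
  obtain ⟨k, rfl⟩ : ∃ k', k = k' + 1 := ⟨k - 1, by lia⟩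
  simp only [blockEmbedding, finProdFinEquiv_apply_val, Perm.sigmaCongrRightHom_apply,
    sigmaCongrRight_apply, finRotate_of_lt (show b < k by lia), Function.Embedding.coeFn_mk]
  ring

theorem isPretransitive_of_forall_succ {n : ℕ} {G : Subgroup (Perm (Fin n))}
    (hG : ∀ i : Fin n, (i : ℕ) + 1 < n → ∃ g ∈ G, (g i : ℕ) = i + 1) :
    MulAction.IsPretransitive G (Fin n) := by
  rcases n with _ | n
  · exact ⟨fun i ↦ i.elim0⟩
  refine (MulAction.isPretransitive_iff_base 0).mpr fun i ↦ ?_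
  induction i using Fin.induction with
  | zero => exact ⟨1, one_smul _ _⟩
  | succ i ih =>
    obtain ⟨g, hg⟩ := ih
    obtain ⟨h, hhG, hh⟩ := hG i.castSucc (by simp)
    exact ⟨⟨h, hhG⟩ * g, by rw [mul_smul, hg]; exact Fin.ext hh⟩

theorem isPretransitive_closure_blockRotation {n k : ℕ} (hk : 2 ≤ k) (hn : k ≤ n) :
    MulAction.IsPretransitive (Subgroup.closure
      {blockRotation n k 0, blockRotation n k 1, blockRotation n k (n - k)}) (Fin n) := by
  refine isPretransitive_of_forall_succ fun i hi ↦ ?_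
  have hdiv := Nat.mod_add_div (i : ℕ) k
  have hmod := Nat.mod_lt (i : ℕ) (by lia : k > 0)
  rcases le_or_gt (n - k) (i : ℕ) with hlast | hlast
  · exact ⟨blockRotation n k (n - k), Subgroup.subset_closure (by simp),
      val_blockRotation_apply (a := 0) (b := i - (n - k)) (by lia) (by lia) (by lia)⟩
  rcases lt_or_ge ((i : ℕ) % k + 1) k with hinner | hend
  · exact ⟨blockRotation n k 0, Subgroup.subset_closure (by simp),
      val_blockRotation_apply (a := i / k) (b := i % k) (by lia) hinner (by lia)⟩
  · exact ⟨blockRotation n k 1, Subgroup.subset_closure (by simp),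
      val_blockRotation_apply (a := i / k) (b := k - 2) (by lia) (by lia) (by lia)⟩

theorem eq_top_of_blockRotation {n k : ℕ} (hk : 3 ≤ k) (hn : k + 2 ≤ n)
    {H : Subgroup (GL (Fin n) ℤ)} (h₀ : permutation (blockRotation n k 0) ∈ H)
    (h₁ : permutation (blockRotation n k 1) ∈ H)
    (hlast : permutation (blockRotation n k (n - k)) ∈ H) {p q a b : Fin n} (hq : (q : ℕ) = 0)
    (hp : (p : ℕ) = 1) (ha : (a : ℕ) = n - k) (hb : (b : ℕ) = n - k + 1) (hqb : q ≠ b)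
    (hap : a ≠ p)
    (hconj : elementary hqb 1 * permutation (blockRotation n k (n - k)) * (elementary hqb 1)⁻¹ ∈ H)
    (hconj' : elementary hap 1 * permutation (blockRotation n k (n - k)) * (elementary hap 1)⁻¹ ∈ H)
    (hD : diagonalUnit q (-1) ∈ H) : H = ⊤ := by
  have := isPretransitive_closure_blockRotation (n := n) (k := k) (by lia) (by lia)
  have hrot_a : (blockRotation n k (n - k) a : ℕ) = a + 1 :=
    val_blockRotation_apply (a := 0) (b := 0) (by lia) (by lia) (by lia)
  obtain rfl : b = blockRotation n k (n - k) a := Fin.ext (by lia)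
  have hrot_b : (blockRotation n k (n - k) (blockRotation n k (n - k) a) : ℕ) = a + 1 + 1 :=
    (val_blockRotation_apply (a := 0) (b := 1) (by lia) (by lia) (by lia)).trans (by rw [hrot_a])
  have hqp : q ≠ p := by lia
  have helem : elementary hqp 1 ∈ H := by
    simpa only [mul_one] using elementary_mem_of_conj_mem hlast
      (blockRotation_apply_of_lt (by lia)) (blockRotation_apply_of_lt (by lia)) (by lia) (by lia)
      hqp hqb hap hconj hconj'
  have hrot_q : blockRotation n k 0 q = p :=
    Fin.ext ((val_blockRotation_apply (a := 0) (b := 0) (by lia) (by lia) (by lia)).trans (by lia))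
  refine eq_top_of_isPretransitive_closure (i := q) (S := {blockRotation n k 0,
    blockRotation n k 1, blockRotation n k (n - k)}) (by simp [h₀, h₁, hlast]) ?_ hD
  simp only [Set.mem_insert_iff, Set.mem_singleton_iff, forall_eq_or_imp, forall_eq, hrot_q,
    blockRotation_apply_of_lt (show (q : ℕ) < 1 by lia),
    blockRotation_apply_of_lt (show (q : ℕ) < n - k by lia)]
  exact ⟨fun _ ↦ helem, .refl q, .refl q⟩

end BlockRotation

end GLGeneration

open GLGeneration Matrix in
theorem GL_n_Z_generated_by_eight_order_k_and_one_involution_general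
    (k n : ℕ) (hk : 3 ≤ k) (hn : k + 2 ≤ n) :
    ∃ M₁ M₂ M₃ M₄ M₅ M₆ : Matrix.GeneralLinearGroup (Fin n) ℤ,
      orderOf M₁ = k ∧ orderOf M₂ = k ∧ orderOf M₃ = k ∧ orderOf M₄ = k ∧ orderOf M₅ = k ∧
      orderOf M₆ = 2 ∧ Subgroup.closure {M₁, M₂, M₃, M₄, M₅, M₆} = ⊤ := by
  let q : Fin n := ⟨0, by lia⟩
  let p : Fin n := ⟨1, by lia⟩
  let a : Fin n := ⟨n - k, by lia⟩
  let b : Fin n := ⟨n - k + 1, by lia⟩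
  have hqb : q ≠ b := Fin.ne_of_val_ne (by lia)
  have hap : a ≠ p := Fin.ne_of_val_ne (by lia)
  have horder (s : ℕ) (hs : s + k ≤ n) :
      orderOf (permutation (blockRotation n k s) : GL (Fin n) ℤ) = k :=
    (orderOf_permutation _).trans (orderOf_blockRotation (by lia) hs)
  let last : GL (Fin n) ℤ := permutation (blockRotation n k (n - k))
  have hconj (g : GL (Fin n) ℤ) : orderOf (g * last * g⁻¹) = k :=
    ((MulAut.conj g).orderOf_eq last).trans (horder _ (by lia))
  refine ⟨permutation (blockRotation n k 0), permutation (blockRotation n k 1), last,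
    elementary hqb 1 * last * (elementary hqb 1)⁻¹, elementary hap 1 * last * (elementary hap 1)⁻¹,
    diagonalUnit q (-1), horder _ (by lia), horder _ (by lia), horder _ (by lia), hconj _, hconj _,
    orderOf_diagonalUnit_neg_one q, ?_⟩
  apply eq_top_of_blockRotation hk hn (p := p) (q := q) (a := a) (b := b) (hqb := hqb) (hap := hap)
    <;> first | rfl | exact Subgroup.subset_closure (by simp [last])

/-- For `k ≥ 5` and `n ≥ 2(k - 1)`, the group `GL(n, ℤ)` is generated by nine
matrices, eight of order exactly `k` and one of order exactly `2`. -/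
theorem GL_n_Z_generated_by_eight_order_k_and_one_involution
    (k n : ℕ) (hk : 5 ≤ k) (hn : 2 * (k - 1) ≤ n) :
    ∃ M₁ M₂ M₃ M₄ M₅ M₆ M₇ M₈ M₉ : Matrix.GeneralLinearGroup (Fin n) ℤ,
      orderOf M₁ = k ∧ orderOf M₂ = k ∧ orderOf M₃ = k ∧ orderOf M₄ = k ∧
      orderOf M₅ = k ∧ orderOf M₆ = k ∧ orderOf M₇ = k ∧ orderOf M₈ = k ∧
      orderOf M₉ = 2 ∧
      Subgroup.closure {M₁, M₂, M₃, M₄, M₅, M₆, M₇, M₈, M₉} = ⊤ := by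
  obtain ⟨M₁, M₂, M₃, M₄, M₅, M₆, h₁, h₂, h₃, h₄, h₅, h₆, htop⟩ :=
    GL_n_Z_generated_by_eight_order_k_and_one_involution_general k n (by lia) (by lia)
  exact ⟨M₁, M₂, M₃, M₄, M₅, M₅, M₅, M₅, M₆, h₁, h₂, h₃, h₄, h₅, h₅, h₅, h₅, h₆,
    by simpa using htop⟩
end

section
/- Let k ≥ 2 and let n be a positive integer such that either n = a·k + b·(k − 1) for some nonnegative integers a, b, or n = a·k + 1 for some positive integer a. Then the integral symplectic group Sp(2n, ℤ) contains an element of order exactly k. -/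
/-!
The permutations of `Option ι` act on the functions `Option ι → R` modulo constants, a free module
of rank `|ι|`, and this action is faithful as soon as `2 ≠ 0` in `R`. Since `GL` embeds into the
symplectic group as the Levi factor `A ↦ diag(A, (A⁻¹)ᵀ)`, the symmetric group on `n + 1` letters
embeds into `Sp(2n, ℤ)`, and it contains a `k`-cycle whenever `k ≤ n + 1`.
-/

section LeviEmbedding

variable {l R : Type*} [Fintype l] [DecidableEq l] [CommRing R]

theorem fromBlocks_zero_transpose_mem_symplecticGroup {A B : Matrix l l R} (hBA : B * A = 1) :
    Matrix.fromBlocks A 0 0 B.transpose ∈ Matrix.symplecticGroup l R := by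
  have hABt : A.transpose * B.transpose = 1 := by
    rw [← Matrix.transpose_mul, hBA, Matrix.transpose_one]
  simp [SymplecticGroup.fromBlocks_mem_iff, hABt]

/-- The embedding `A ↦ diag(A, (A⁻¹)ᵀ)` of `GL` onto the Levi factor of the symplectic group that
stabilizes the two standard Lagrangian subspaces. -/
def leviEmbedding : GL l R →* Matrix.symplecticGroup l R where
  toFun A := ⟨Matrix.fromBlocks A 0 0 (A⁻¹ : GL l R).val.transpose,
    fromBlocks_zero_transpose_mem_symplecticGroup A.inv_mul⟩
  map_one' := Subtype.ext <| by simp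
  map_mul' A B := Subtype.ext <| by
    simp only [Matrix.fromBlocks_multiply, mul_inv_rev, Units.val_mul, Matrix.transpose_mul,
      Submonoid.coe_mul, Matrix.mul_zero, Matrix.zero_mul, add_zero, zero_add]

theorem leviEmbedding_injective :
    Function.Injective (leviEmbedding : GL l R →* Matrix.symplecticGroup l R) :=
  fun _ _ h => Units.ext (Matrix.fromBlocks_inj.mp (congrArg Subtype.val h)).1

end LeviEmbedding

section ReducedPermutation

variable {ι R : Type*} [DecidableEq ι] [CommRing R]

/-- The matrix by which a permutation `σ` of `Option ι` acts on functions `Option ι → R` modulo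
constants. Each class is represented by the function vanishing at `none`, which is why the row of
`none` in the permutation matrix of `σ` is subtracted from every other row. -/
def reducedPermMatrix (R : Type*) [CommRing R] (σ : Equiv.Perm (Option ι)) : Matrix ι ι R :=
  Matrix.of fun i j =>
    (if σ⁻¹ (some i) = some j then 1 else 0) - (if σ⁻¹ none = some j then 1 else 0)

theorem reducedPermMatrix_apply (σ : Equiv.Perm (Option ι)) (i j : ι) :
    reducedPermMatrix R σ i j =
      (if σ⁻¹ (some i) = some j then 1 else 0) - (if σ⁻¹ none = some j then 1 else 0) :=
  rfl

theorem reducedPermMatrix_one : reducedPermMatrix R (1 : Equiv.Perm (Option ι)) = 1 := by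
  ext i j
  simp [reducedPermMatrix_apply, Matrix.one_apply]

theorem sum_ite_mul_reducedPermMatrix [Fintype ι] (τ : Equiv.Perm (Option ι)) (x : Option ι)
    (j : ι) :
    ∑ i, (if x = some i then 1 else 0) * reducedPermMatrix R τ i j =
      (if τ⁻¹ x = some j then 1 else 0) - (if τ⁻¹ none = some j then 1 else 0) := by
  cases x with
  | none => simp
  | some i => simp [reducedPermMatrix_apply]

theorem reducedPermMatrix_mul [Fintype ι] (σ τ : Equiv.Perm (Option ι)) :
    reducedPermMatrix R (σ * τ) = reducedPermMatrix R σ * reducedPermMatrix R τ := by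
  ext i j
  simp only [Matrix.mul_apply, reducedPermMatrix_apply σ, sub_mul, Finset.sum_sub_distrib,
    sum_ite_mul_reducedPermMatrix, sub_sub_sub_cancel_right]
  rw [reducedPermMatrix_apply, mul_inv_rev, Equiv.Perm.mul_apply, Equiv.Perm.mul_apply]

/-- The representation of the symmetric group on `Option ι` by its reduced permutation matrices. -/
def reducedPermHom (ι R : Type*) [Fintype ι] [DecidableEq ι] [CommRing R] :
    Equiv.Perm (Option ι) →* GL ι R :=
  MonoidHom.toHomUnits
    { toFun := reducedPermMatrix R
      map_one' := reducedPermMatrix_one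
      map_mul' := reducedPermMatrix_mul }

theorem perm_option_eq_one_of_forall_some {α : Type*} {σ : Equiv.Perm (Option α)}
    (hσ : ∀ a, σ (some a) = some a) : σ = 1 := by
  ext1 x
  cases x with
  | some a => exact hσ a
  | none =>
    by_contra hnone
    obtain ⟨a, ha⟩ := Option.ne_none_iff_exists'.mp hnone
    exact Option.some_ne_none a (σ.injective ((hσ a).trans ha.symm))

-- Off the fixed points the diagonal entries are `0` or `-1`, so `2 ≠ 0` tells them apart from `1`.
theorem inv_apply_some_eq_of_reducedPermMatrix_eq_one [NeZero (2 : R)]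
    {σ : Equiv.Perm (Option ι)} (hσ : reducedPermMatrix R σ = 1) (i : ι) :
    σ⁻¹ (some i) = some i := by
  have hdiag := congrFun (congrFun hσ i) i
  rw [reducedPermMatrix_apply, Matrix.one_apply_eq] at hdiag
  by_contra hne
  rw [if_neg hne] at hdiag
  refine two_ne_zero (α := R) ?_
  split_ifs at hdiag
  · linear_combination -hdiag
  · linear_combination -2 * hdiag

theorem reducedPermHom_injective [Fintype ι] [NeZero (2 : R)] :
    Function.Injective (reducedPermHom ι R) := by
  rw [injective_iff_map_eq_one]
  intro σ hσ
  exact inv_eq_one.mp <| perm_option_eq_one_of_forall_some <|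
    inv_apply_some_eq_of_reducedPermMatrix_eq_one (congrArg Units.val hσ)

end ReducedPermutation

theorem exists_perm_orderOf_eq {α : Type*} [Fintype α] {k : ℕ} (hk : k ≠ 0)
    (hkα : k ≤ Fintype.card α) : ∃ σ : Equiv.Perm α, orderOf σ = k := by
  classical
  obtain rfl | hk_two : k = 1 ∨ 2 ≤ k := by lia
  · exact ⟨1, orderOf_one⟩
  · obtain ⟨σ, hσ⟩ := (Equiv.Perm.exists_with_cycleType_iff α (m := {k})).2
      ⟨by simpa using hkα, by simpa using hk_two⟩
    exact ⟨σ, by rw [← Equiv.Perm.lcm_cycleType, hσ, Multiset.lcm_singleton, normalize_eq]⟩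

theorem symplectic_group_has_element_of_order_k_general {l R : Type*} [Fintype l] [DecidableEq l]
    [CommRing R] [NeZero (2 : R)] {k : ℕ} (hk : k ≠ 0) (hkl : k ≤ Fintype.card l + 1) :
    ∃ M : Matrix.symplecticGroup l R, orderOf M = k := by
  obtain ⟨σ, hσ⟩ := exists_perm_orderOf_eq hk (hkl.trans_eq Fintype.card_option.symm)
  refine ⟨leviEmbedding (reducedPermHom l R σ), ?_⟩
  rw [orderOf_injective _ leviEmbedding_injective, orderOf_injective _ reducedPermHom_injective, hσ]

theorem le_add_one_of_eq_mul_add_mul_sub_one_or_eq_mul_add_one {k n : ℤ} (hn : 1 ≤ n)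
    (h : (∃ a b : ℤ, 0 ≤ a ∧ 0 ≤ b ∧ n = a * k + b * (k - 1)) ∨
      (∃ a : ℤ, 1 ≤ a ∧ n = a * k + 1)) :
    k ≤ n + 1 := by
  by_contra! hnk
  rcases h with ⟨a, b, ha, hb, hn_eq⟩ | ⟨a, ha, hn_eq⟩
  · have hab : 1 ≤ a + b := by
      by_contra! hab
      obtain ⟨rfl, rfl⟩ : a = 0 ∧ b = 0 := by lia
      lia
    have : k - 1 ≤ n := calc
      k - 1 ≤ (a + b) * (k - 1) := le_mul_of_one_le_left (by lia) hab
      _ ≤ a + (a + b) * (k - 1) := by lia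
      _ = n := by rw [hn_eq]; ring
    lia
  · have : k ≤ a * k := le_mul_of_one_le_left (by lia) ha
    lia

/-- For `k ≥ 2` and a positive integer `n` which can be written either as
`a·k + b·(k - 1)` with `a, b` nonnegative integers or as `a·k + 1` with `a` a
positive integer, the integral symplectic group `Sp(2n, ℤ)` contains an element
of order exactly `k`. -/
theorem symplectic_group_has_element_of_order_k
    (k : ℕ) (n : ℕ) (hk : 2 ≤ k) (hn : 1 ≤ n)
    (h : (∃ a b : ℤ, 0 ≤ a ∧ 0 ≤ b ∧ (n : ℤ) = a * k + b * (k - 1)) ∨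
      (∃ a : ℤ, 1 ≤ a ∧ (n : ℤ) = a * k + 1)) :
    ∃ M : Matrix.symplecticGroup (Fin n) ℤ, orderOf M = k := by
  have hkn := le_add_one_of_eq_mul_add_mul_sub_one_or_eq_mul_add_one (by lia) h
  exact symplectic_group_has_element_of_order_k_general (by lia) (by rw [Fintype.card_fin]; lia)
end
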